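/- arXiv:1805.07759 — 2 statements merged into one kernel-verified Lean document; each statement's English description precedes it below -/
import Mathlib

section
/- Let M ∈ M_ℂ(2n,2n) be skew-symmetric with J·conj(M) = M·J. Then there exist a quaternionic unitary matrix 𝓔 ∈ U_ℍ(n) and real numbers ν₀,…,ν_{n−1} such that τ(𝓔)ᵗ·M·τ(𝓔) = [[0, D],[−D, 0]] in block form, where D = diag(ν₀,…,ν_{n−1}). -/
open scoped Quaternion
open Matrix Sum

noncomputable section

/-- The complex part `a` in the decomposition `q = a + b·j` of a quaternion. -/
def qa (q : ℍ[ℝ]) : ℂ := ⟨q.re, q.imI⟩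

/-- The complex part `b` in the decomposition `q = a + b·j` of a quaternion. -/
def qb (q : ℍ[ℝ]) : ℂ := ⟨q.imJ, q.imK⟩

/-- Entrywise complex conjugation of a complex matrix. -/
def conjM {m k : Type*} (M : Matrix m k ℂ) : Matrix m k ℂ := M.map (starRingEnd ℂ)

/-- The embedding τ : M_ℍ(p,m) → M_ℂ(2p,2m), τ(a + b·j) = [[a, −b],[conj b, conj a]]. -/
def tau {p m : ℕ} (M : Matrix (Fin p) (Fin m) ℍ[ℝ]) :
    Matrix (Fin p ⊕ Fin p) (Fin m ⊕ Fin m) ℂ :=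
  Matrix.fromBlocks (M.map qa) (-(M.map qb)) (conjM (M.map qb)) (conjM (M.map qa))

/-- The standard symplectic matrix J = [[0, Iₙ],[−Iₙ, 0]]. -/
def Jmat (n : ℕ) : Matrix (Fin n ⊕ Fin n) (Fin n ⊕ Fin n) ℂ :=
  Matrix.fromBlocks 0 1 (-1) 0

/-- index set {0,…,2n−1}, as two blocks. -/
abbrev Idx (n : ℕ) := Fin n ⊕ Fin n

/-- ℂ^{2n}. -/
abbrev Vc (n : ℕ) := Idx n → ℂ

/-- The exterior algebra of ℂ^{2n}. -/
abbrev EA (n : ℕ) := ExteriorAlgebra ℂ (Vc n)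

/-- Basis 1-vectors ω^A of the exterior algebra. -/
def ω {n : ℕ} (A : Idx n) : EA n := ExteriorAlgebra.ι ℂ (Pi.single A 1)

/-- Ω_{2n} = ω⁰∧ω^n∧ω¹∧ω^{n+1}∧…∧ω^{n−1}∧ω^{2n−1}. -/
def Ωn (n : ℕ) : EA n := (List.ofFn fun l : Fin n => ω (inl l) * ω (inr l)).prod

/-- β_n = Σ_l ω^l∧ω^{n+l}. -/
def βn (n : ℕ) : EA n := ∑ l : Fin n, ω (inl l) * ω (inr l)

/-- Induced action of a 2n×2n complex matrix on the exterior algebra,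
determined by N.ω^A = Σ_B N_{AB} ω^B. -/
def actE {n : ℕ} (N : Matrix (Idx n) (Idx n) ℂ) : EA n →ₐ[ℂ] EA n :=
  ExteriorAlgebra.map (Matrix.mulVecLin Nᵀ)

/-- ℝ^{4n}. -/
abbrev V4 (n : ℕ) := Fin (4 * n) → ℝ

/-- The coordinate index 4l+β. -/
def X {n : ℕ} (l : Fin n) (β : Fin 4) : Fin (4 * n) :=
  ⟨4 * l.val + β.val, by have h1 := l.isLt; have h2 := β.isLt; omega⟩

/-- Partial derivative of a complex-valued function on ℝ^{4n}. -/
def pd {n : ℕ} (a : Fin (4 * n)) (f : V4 n → ℂ) : V4 n → ℂ :=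
  fun q => fderiv ℝ f q (Pi.single a 1)

/-- The operators ∇_{Aα}, α = 0' (α=0) or 1' (α=1). -/
def nabla {n : ℕ} (A : Idx n) (α : Fin 2) (f : V4 n → ℂ) : V4 n → ℂ :=
  fun q =>
    match A with
    | Sum.inl l =>
        if α = 0 then pd (X l 0) f q + Complex.I * pd (X l 1) f q
        else -pd (X l 2) f q - Complex.I * pd (X l 3) f q
    | Sum.inr l =>
        if α = 0 then pd (X l 2) f q - Complex.I * pd (X l 3) f q
        else pd (X l 0) f q - Complex.I * pd (X l 1) f q

/-- ∇_{Aα} applied to a real-valued function. -/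
def nablaR {n : ℕ} (A : Idx n) (α : Fin 2) (u : V4 n → ℝ) : V4 n → ℂ :=
  nabla A α (fun x => ((u x : ℝ) : ℂ))

/-- Δ_{AB}u = ½(∇_{A0'}∇_{B1'}u − ∇_{B0'}∇_{A1'}u). -/
def Delta {n : ℕ} (A B : Idx n) (u : V4 n → ℝ) : V4 n → ℂ :=
  fun q => (1 / 2 : ℂ) *
    (nabla A 0 (nabla B 1 (fun x => ((u x : ℝ) : ℂ))) q
      - nabla B 0 (nabla A 1 (fun x => ((u x : ℝ) : ℂ))) q)

/-- The Baston operator Δu = Σ_{A,B} Δ_{AB}u · ω^A∧ω^B. -/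
def Baston {n : ℕ} (u : V4 n → ℝ) (q : V4 n) : EA n :=
  ∑ A : Idx n, ∑ B : Idx n, Delta A B u q • (ω A * ω B)

/-- The quaternion units. -/
def iH : ℍ[ℝ] := ⟨0, 1, 0, 0⟩
def jH : ℍ[ℝ] := ⟨0, 0, 1, 0⟩
def kH : ℍ[ℝ] := ⟨0, 0, 0, 1⟩

/-- Partial derivative of a quaternion-valued function on ℝ^{4n}. -/
def pdH {n : ℕ} (a : Fin (4 * n)) (f : V4 n → ℍ[ℝ]) : V4 n → ℍ[ℝ] :=
  fun q => fderiv ℝ f q (Pi.single a 1)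

/-- Partial derivative of a real-valued function on ℝ^{4n}. -/
def pdR {n : ℕ} (a : Fin (4 * n)) (f : V4 n → ℝ) : V4 n → ℝ :=
  fun q => fderiv ℝ f q (Pi.single a 1)

/-- ∂u/∂q_k = (∂_{x_{4k}} − i∂_{x_{4k+1}} − j∂_{x_{4k+2}} − k∂_{x_{4k+3}})u for real u. -/
def dq {n : ℕ} (k : Fin n) (u : V4 n → ℝ) : V4 n → ℍ[ℝ] :=
  fun q => ⟨pdR (X k 0) u q, -pdR (X k 1) u q, -pdR (X k 2) u q, -pdR (X k 3) u q⟩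

/-- ∂/∂q̄_l = ∂_{x_{4l}} + i∂_{x_{4l+1}} + j∂_{x_{4l+2}} + k∂_{x_{4l+3}} on ℍ-valued functions. -/
def dqbar {n : ℕ} (l : Fin n) (f : V4 n → ℍ[ℝ]) : V4 n → ℍ[ℝ] :=
  fun q => pdH (X l 0) f q + iH * pdH (X l 1) f q + jH * pdH (X l 2) f q + kH * pdH (X l 3) f q

/-- The quaternionic Hessian of a real function u. -/
def Hess {n : ℕ} (u : V4 n → ℝ) (q : V4 n) : Matrix (Fin n) (Fin n) ℍ[ℝ] :=
  Matrix.of fun l k => dqbar l (dq k u) q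

/-- ω^I = ω^{i₁}∧…∧ω^{i_p} for a multi-index I. -/
def ωProd {n p : ℕ} (I : Fin p → Idx n) : EA n :=
  (List.ofFn fun j => ω (I j)).prod

/-- The Λ^pℂ^{2n}-valued function with coefficient functions f: F = Σ_I f_I ω^I. -/
def formVal {n p : ℕ} (f : (Fin p → Idx n) → V4 n → ℂ) (q : V4 n) : EA n :=
  ∑ I : Fin p → Idx n, f I q • ωProd I

/-- Coefficients of d_α F for F with coefficients f:
d_αF = Σ_{A,I} ∇_{Aα}f_I · ω^A∧ω^I. -/
def dcoef {n p : ℕ} (α : Fin 2) (f : (Fin p → Idx n) → V4 n → ℂ) :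
    (Fin (p + 1) → Idx n) → V4 n → ℂ :=
  fun J => nabla (J 0) α (f (Fin.tail J))

/-- Coefficients of the wedge product F∧G. -/
def wedgeCoef {n p q : ℕ} (f : (Fin p → Idx n) → V4 n → ℂ)
    (g : (Fin q → Idx n) → V4 n → ℂ) : (Fin (p + q) → Idx n) → V4 n → ℂ :=
  fun J x => f (fun i => J (Fin.castAdd q i)) x * g (fun i => J (Fin.natAdd p i)) x

/-- The complex coordinate functions z^{Aα}. -/
def zc {n : ℕ} (A : Idx n) (α : Fin 2) : V4 n → ℂ :=
  fun x =>
    match A with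
    | Sum.inl l => if α = 0 then ⟨x (X l 0), -x (X l 1)⟩ else ⟨-x (X l 2), x (X l 3)⟩
    | Sum.inr l => if α = 0 then ⟨x (X l 2), x (X l 3)⟩ else ⟨x (X l 0), x (X l 1)⟩

/-- The quaternionic vector associated to a point of ℝ^{4n}. -/
def quatv {n : ℕ} (v : V4 n) : Fin n → ℍ[ℝ] :=
  fun l => ⟨v (X l 0), v (X l 1), v (X l 2), v (X l 3)⟩

/-- The four real components of a quaternion. -/
def comp4 (q : ℍ[ℝ]) : Fin 4 → ℝ := ![q.re, q.imI, q.imJ, q.imK]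

/-- The real-linear action of a quaternionic matrix 𝓤 on ℝ^{4n} ≅ ℍⁿ, q ↦ 𝓤q. -/
def act {n : ℕ} (U : Matrix (Fin n) (Fin n) ℍ[ℝ]) (v : V4 n) : V4 n :=
  fun a => comp4 ((U *ᵥ quatv v) ⟨a.val / 4, by have := a.isLt; omega⟩)
    ⟨a.val % 4, by omega⟩


/-!
Since `J² = -1`, the reality condition says exactly that `-J M` lies in the image of `τ`; as `τ`
intertwines the conjugate transposes, skew symmetry of `M` then makes `H = τ⁻¹(-J M)` Hermitian,
and `M = J τ(H)`. From `τ(E)ᵗ J = J τ(E)ᴴ` we get `τ(E)ᵗ M τ(E) = J τ(Eᴴ H E)`, so it remains to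
diagonalize `H`. As a real operator on `ℍⁿ = ℝ⁴ⁿ`, `H` is symmetric, hence has an eigenvector in
every nonzero invariant subspace. For real eigenvalues the side on which scalars act is irrelevant,
and `H` preserves the quaternionic orthogonal complement of the eigenvectors already found.
-/

section QuaternionCoordinates

lemma quaternion_ext_complex {x y : ℍ[ℝ]} (ha : qa x = qa y) (hb : qb x = qb y) : x = y := by
  simp only [qa, qb, Complex.mk.injEq] at ha hb
  exact QuaternionAlgebra.ext ha.1 ha.2 hb.1 hb.2

lemma qa_coe (r : ℝ) : qa (r : ℍ[ℝ]) = r := rfl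

lemma qb_coe (r : ℝ) : qb (r : ℍ[ℝ]) = 0 := rfl

lemma qa_zero : qa 0 = 0 := rfl

lemma qb_zero : qb 0 = 0 := rfl

lemma qa_star (x : ℍ[ℝ]) : qa (star x) = star (qa x) := by
  apply Complex.ext <;> simp [qa]

lemma qb_star (x : ℍ[ℝ]) : qb (star x) = -qb x := by
  apply Complex.ext <;> simp [qb]

lemma qa_mul (x y : ℍ[ℝ]) : qa (x * y) = qa x * qa y - qb x * star (qb y) := by
  apply Complex.ext <;> simp [qa, qb] <;> ring

lemma qb_mul (x y : ℍ[ℝ]) : qb (x * y) = qa x * qb y + qb x * star (qa y) := by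
  apply Complex.ext <;> simp [qa, qb] <;> ring

lemma qa_sum {ι : Type*} (s : Finset ι) (f : ι → ℍ[ℝ]) :
    qa (∑ i ∈ s, f i) = ∑ i ∈ s, qa (f i) :=
  map_sum (AddMonoidHom.mk' qa fun _ _ => rfl) f s

lemma qb_sum {ι : Type*} (s : Finset ι) (f : ι → ℍ[ℝ]) :
    qb (∑ i ∈ s, f i) = ∑ i ∈ s, qb (f i) :=
  map_sum (AddMonoidHom.mk' qb fun _ _ => rfl) f s

variable {l m n : Type*} [Fintype m]

lemma map_qa_mul (A : Matrix l m ℍ[ℝ]) (B : Matrix m n ℍ[ℝ]) :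
    (A * B).map qa = A.map qa * B.map qa - A.map qb * conjM (B.map qb) := by
  ext i j
  simp [conjM, mul_apply, qa_sum, qa_mul]

lemma map_qb_mul (A : Matrix l m ℍ[ℝ]) (B : Matrix m n ℍ[ℝ]) :
    (A * B).map qb = A.map qa * B.map qb + A.map qb * conjM (B.map qa) := by
  ext i j
  simp [conjM, mul_apply, qb_sum, qb_mul, Finset.sum_add_distrib]

end QuaternionCoordinates

section EntrywiseConjugation

variable {l m n : Type*}

lemma conjM_conjM (A : Matrix m n ℂ) : conjM (conjM A) = A := by
  ext; simp [conjM]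

lemma conjM_neg (A : Matrix m n ℂ) : conjM (-A) = -conjM A := by
  ext; simp [conjM]

lemma conjM_add (A B : Matrix m n ℂ) : conjM (A + B) = conjM A + conjM B := by
  ext; simp [conjM]

lemma conjM_sub (A B : Matrix m n ℂ) : conjM (A - B) = conjM A - conjM B := by
  ext; simp [conjM]

lemma conjM_mul [Fintype m] (A : Matrix l m ℂ) (B : Matrix m n ℂ) :
    conjM (A * B) = conjM A * conjM B :=
  Matrix.map_mul

lemma conjTranspose_conjM (A : Matrix m n ℂ) : (conjM A)ᴴ = Aᵀ := by
  ext; simp [conjM]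

lemma conjM_transpose (A : Matrix m n ℂ) : conjM Aᵀ = Aᴴ := rfl

lemma conjM_Jmat (n : ℕ) : conjM (Jmat n) = Jmat n := by
  ext (i | i) (j | j) <;> simp [conjM, Jmat, one_apply, apply_ite]

lemma Jmat_conjTranspose (n : ℕ) : (Jmat n)ᴴ = -Jmat n := by
  simp [Jmat, fromBlocks_conjTranspose, fromBlocks_neg]

lemma Jmat_mul_Jmat (n : ℕ) : Jmat n * Jmat n = -1 := by
  simp [Jmat, fromBlocks_multiply, ← fromBlocks_one, fromBlocks_neg]

end EntrywiseConjugation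

section Tau

variable {p m k : ℕ}

lemma tau_injective : Function.Injective (tau : Matrix (Fin p) (Fin m) ℍ[ℝ] → _) := by
  intro A B h
  obtain ⟨ha, hb, -, -⟩ := fromBlocks_inj.1 h
  ext1 i j
  exact quaternion_ext_complex (congrFun₂ ha i j) (congrFun₂ (neg_injective hb) i j)

lemma tau_mul (A : Matrix (Fin p) (Fin m) ℍ[ℝ]) (B : Matrix (Fin m) (Fin k) ℍ[ℝ]) :
    tau (A * B) = tau A * tau B := by
  simp only [tau, fromBlocks_multiply, map_qa_mul, map_qb_mul, conjM_add, conjM_sub, conjM_mul,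
    conjM_conjM, Matrix.mul_neg, Matrix.neg_mul]
  congr 1 <;> abel

lemma tau_conjTranspose (A : Matrix (Fin p) (Fin m) ℍ[ℝ]) : tau Aᴴ = (tau A)ᴴ := by
  ext (i | i) (j | j) <;> simp [tau, conjM, qa_star, qb_star]

lemma tau_diagonal_algebraMap (ν : Fin p → ℝ) :
    tau (diagonal (algebraMap ℝ ℍ[ℝ] ∘ ν)) =
      fromBlocks (diagonal fun i => (ν i : ℂ)) 0 0 (diagonal fun i => (ν i : ℂ)) := by
  rw [tau, diagonal_map qa_zero, diagonal_map qb_zero]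
  simp [conjM, qa_coe, qb_coe, -fromBlocks_diagonal]

lemma mem_range_tau_iff (N : Matrix (Idx p) (Idx m) ℂ) :
    N ∈ Set.range tau ↔ Jmat p * conjM N = N * Jmat m := by
  constructor
  · rintro ⟨A, rfl⟩
    ext (i | i) (j | j) <;> simp [tau, conjM, Jmat, fromBlocks_map, fromBlocks_multiply]
  · intro h
    obtain ⟨P, Q, R, S, rfl⟩ : ∃ P Q R S, N = fromBlocks P Q R S :=
      ⟨_, _, _, _, (fromBlocks_toBlocks N).symm⟩
    simp only [conjM, Jmat, fromBlocks_map, fromBlocks_multiply, fromBlocks_inj, Matrix.zero_mul,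
      Matrix.one_mul, Matrix.mul_zero, Matrix.mul_one, Matrix.neg_mul, Matrix.mul_neg, zero_add,
      add_zero] at h
    obtain ⟨hR, hS, -, -⟩ := h
    obtain ⟨A, hP, hQ⟩ : ∃ A : Matrix (Fin p) (Fin m) ℍ[ℝ], A.map qa = P ∧ A.map qb = -Q :=
      ⟨of fun i j => ⟨(P i j).re, (P i j).im, (-Q i j).re, (-Q i j).im⟩, rfl, rfl⟩
    refine ⟨A, ?_⟩
    rw [tau, hP, hQ, neg_neg, ← hR, ← hS]
    congr 1 <;> exact conjM_conjM _

lemma tau_transpose_mul_Jmat (A : Matrix (Fin p) (Fin m) ℍ[ℝ]) :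
    (tau A)ᵀ * Jmat p = Jmat m * (tau A)ᴴ := by
  have h := congrArg conjTranspose ((mem_range_tau_iff (tau A)).1 ⟨A, rfl⟩)
  simpa only [conjTranspose_mul, conjTranspose_conjM, Jmat_conjTranspose, Matrix.mul_neg,
    Matrix.neg_mul, neg_inj] using h

lemma exists_isHermitian_Jmat_mul_tau_eq {n : ℕ} {M : Matrix (Idx n) (Idx n) ℂ}
    (hskew : Mᵀ = -M) (hreal : Jmat n * conjM M = M * Jmat n) :
    ∃ H : Matrix (Fin n) (Fin n) ℍ[ℝ], H.IsHermitian ∧ Jmat n * tau H = M := by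
  have hconj : conjM M = -Jmat n * M * Jmat n := by
    rw [Matrix.mul_assoc, ← hreal, ← Matrix.mul_assoc, Matrix.neg_mul, Jmat_mul_Jmat, neg_neg,
      Matrix.one_mul]
  obtain ⟨H, hH⟩ : -(Jmat n * M) ∈ Set.range tau := by
    rw [mem_range_tau_iff, conjM_neg, conjM_mul, conjM_Jmat, hreal]
    simp only [Matrix.mul_assoc, Matrix.mul_neg, Matrix.neg_mul]
  refine ⟨H, tau_injective ?_, ?_⟩
  · rw [tau_conjTranspose, hH, conjTranspose_neg, conjTranspose_mul, Jmat_conjTranspose,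
      ← conjM_transpose, hskew, conjM_neg, hconj]
    simp [Matrix.mul_assoc, Jmat_mul_Jmat]
  · rw [hH, Matrix.mul_neg, ← Matrix.mul_assoc, Jmat_mul_Jmat, Matrix.neg_mul, Matrix.one_mul,
      neg_neg]

end Tau

section Spectral

lemma exists_unit_eigenvector_mem {𝕜 F : Type*} [RCLike 𝕜] [NormedAddCommGroup F]
    [InnerProductSpace 𝕜 F] [FiniteDimensional 𝕜 F] {T : F →ₗ[𝕜] F} (hT : T.IsSymmetric)
    {W : Submodule 𝕜 F} (hW : W ≠ ⊥) (hTW : ∀ x ∈ W, T x ∈ W) :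
    ∃ e ∈ W, ‖e‖ = 1 ∧ ∃ r : ℝ, T e = (r : 𝕜) • e := by
  have : Nontrivial W := Submodule.nontrivial_iff_ne_bot.2 hW
  obtain ⟨r, hr⟩ : ∃ r : ℝ, Module.End.HasEigenvalue (T.restrict hTW) (r : 𝕜) :=
    ⟨_, (hT.restrict_invariant hTW).hasEigenvalue_iSup_of_finiteDimensional⟩
  obtain ⟨w, hw⟩ := hr.exists_hasEigenvector
  have hw₀ : (w : F) ≠ 0 := fun h => hw.2 (Subtype.ext h)
  refine ⟨((‖(w : F)‖⁻¹ : ℝ) : 𝕜) • w, W.smul_mem _ w.2, ?_, r, ?_⟩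
  · simp [norm_smul, hw₀]
  · rw [map_smul, smul_comm]
    exact congrArg _ (congrArg Subtype.val hw.apply_eq_smul)

variable {m n κ ι : Type*} [Fintype n]

/-- Multiplication by a quaternionic matrix, as a real-linear map between Euclidean spaces
`ℍⁿ = ℝ⁴ⁿ`. The scalars are restricted to `ℝ` because Mathlib's inner product spaces and spectral
theory are only available over `RCLike` fields. -/
def realEuclideanLin (A : Matrix m n ℍ[ℝ]) :
    PiLp 2 (fun _ : n => ℍ[ℝ]) →ₗ[ℝ] PiLp 2 (fun _ : m => ℍ[ℝ]) :=
  (WithLp.linearEquiv 2 ℝ (m → ℍ[ℝ])).symm.toLinearMap ∘ₗ mulVecBilin ℝ ℝ A ∘ₗ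
    (WithLp.linearEquiv 2 ℝ (n → ℍ[ℝ])).toLinearMap

lemma ofLp_realEuclideanLin (A : Matrix m n ℍ[ℝ]) (x : PiLp 2 fun _ : n => ℍ[ℝ]) :
    (realEuclideanLin A x).ofLp = A *ᵥ x.ofLp := rfl

variable [Fintype m] [Fintype κ] [Fintype ι]

lemma inner_eq_re_star_dotProduct (x y : PiLp 2 fun _ : m => ℍ[ℝ]) :
    inner ℝ x y = (star x.ofLp ⬝ᵥ y.ofLp).re := by
  have hre (f : m → ℍ[ℝ]) : (∑ i, f i).re = ∑ i, (f i).re :=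
    map_sum (AddMonoidHom.mk' (fun q : ℍ[ℝ] => q.re) fun _ _ => rfl) f _
  simp only [PiLp.inner_apply, Quaternion.inner_def, dotProduct, hre]
  refine Finset.sum_congr rfl fun i _ => ?_
  simp

lemma star_dotProduct_self_eq_norm_sq (x : PiLp 2 fun _ : m => ℍ[ℝ]) :
    star x.ofLp ⬝ᵥ x.ofLp = ((‖x‖ ^ 2 : ℝ) : ℍ[ℝ]) := by
  simp only [PiLp.norm_sq_eq_of_L2, dotProduct, Pi.star_apply, Quaternion.star_mul_self,
    Quaternion.normSq_eq_norm_mul_self, ← pow_two]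
  exact (map_sum (algebraMap ℝ ℍ[ℝ]) _ _).symm

lemma isSymmetric_realEuclideanLin {A : Matrix m m ℍ[ℝ]} (hA : A.IsHermitian) :
    (realEuclideanLin A).IsSymmetric := fun x y => by
  simp only [inner_eq_re_star_dotProduct, ofLp_realEuclideanLin, star_mulVec, hA.eq,
    dotProduct_mulVec]

lemma ker_realEuclideanLin_ne_bot (B : Matrix m n ℍ[ℝ]) (h : Fintype.card m < Fintype.card n) :
    LinearMap.ker (realEuclideanLin B) ≠ ⊥ := by
  apply LinearMap.ker_ne_bot_of_finrank_lt
  simp only [(WithLp.linearEquiv 2 ℝ _).finrank_eq, Module.finrank_pi_fintype,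
    Quaternion.finrank_eq_four, Finset.sum_const, Finset.card_univ, smul_eq_mul]
  lia

/-- The columns of `E` are orthonormal eigenvectors of `A` with real eigenvalues `ν`. The number
of columns is arbitrary, so that such a family can be enlarged one vector at a time; orthonormality
is with respect to the quaternionic form `star x ⬝ᵥ y`. -/
structure IsEigenframe [DecidableEq κ] (A : Matrix m m ℍ[ℝ]) (E : Matrix m κ ℍ[ℝ])
    (ν : κ → ℝ) : Prop where
  conjTranspose_mul_self : Eᴴ * E = 1
  mul_eq : A * E = E * diagonal (algebraMap ℝ ℍ[ℝ] ∘ ν)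

lemma exists_unit_eigenvector_orthogonal {A : Matrix m m ℍ[ℝ]} (hA : A.IsHermitian)
    {E : Matrix m κ ℍ[ℝ]} {D : Matrix κ κ ℍ[ℝ]} (hE : A * E = E * D)
    (hκ : Fintype.card κ < Fintype.card m) :
    ∃ (e : m → ℍ[ℝ]) (r : ℝ), Eᴴ *ᵥ e = 0 ∧ star e ⬝ᵥ e = 1 ∧ A *ᵥ e = r • e := by
  have hE' : Eᴴ * A = Dᴴ * Eᴴ := by
    simpa only [conjTranspose_mul, hA.eq] using congrArg conjTranspose hE
  have hinv : ∀ x ∈ LinearMap.ker (realEuclideanLin Eᴴ),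
      realEuclideanLin A x ∈ LinearMap.ker (realEuclideanLin Eᴴ) := fun x hx => by
    have hx' : Eᴴ *ᵥ x.ofLp = 0 := congrArg WithLp.ofLp hx
    refine WithLp.ofLp_injective 2 ?_
    simp only [ofLp_realEuclideanLin, mulVec_mulVec, hE']
    rw [← mulVec_mulVec, hx', mulVec_zero, WithLp.ofLp_zero]
  obtain ⟨e, he, hnorm, r, hr⟩ := exists_unit_eigenvector_mem (isSymmetric_realEuclideanLin hA)
    (ker_realEuclideanLin_ne_bot Eᴴ hκ) hinv
  refine ⟨e.ofLp, r, congrArg WithLp.ofLp he, ?_, congrArg WithLp.ofLp hr⟩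
  rw [star_dotProduct_self_eq_norm_sq, hnorm, one_pow, Quaternion.coe_one]

namespace IsEigenframe

variable [DecidableEq κ] [DecidableEq ι] {A : Matrix m m ℍ[ℝ]} {E : Matrix m κ ℍ[ℝ]} {ν : κ → ℝ}

lemma fromCols (hE : IsEigenframe A E ν) {e : m → ℍ[ℝ]} {r : ℝ} (horth : Eᴴ *ᵥ e = 0)
    (hunit : star e ⬝ᵥ e = 1) (heigen : A *ᵥ e = r • e) :
    IsEigenframe A (fromCols E (replicateCol Unit e)) (Sum.elim ν fun _ => r) where
  conjTranspose_mul_self := by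
    have hcol : Eᴴ * replicateCol Unit e = 0 := by rw [← replicateCol_mulVec, horth]; rfl
    have hrow : (replicateCol Unit e)ᴴ * E = 0 := by
      simpa using congrArg conjTranspose hcol
    have hone : (replicateCol Unit e)ᴴ * replicateCol Unit e = 1 := by
      ext1 i j
      rw [conjTranspose_replicateCol, replicateRow_mul_replicateCol_apply, hunit]
      rfl
    rw [conjTranspose_fromCols_eq_fromRows_conjTranspose, fromRows_mul_fromCols,
      hE.conjTranspose_mul_self, hcol, hrow, hone, fromBlocks_one]
  mul_eq := by
    have hcol : A * replicateCol Unit e =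
        replicateCol Unit e * diagonal (algebraMap ℝ ℍ[ℝ] ∘ fun _ : Unit => r) := by
      rw [← replicateCol_mulVec, heigen]
      ext1 i j
      rw [mul_diagonal, replicateCol_apply, replicateCol_apply, Pi.smul_apply, Algebra.smul_def,
        Algebra.commutes, Function.comp_apply]
    rw [mul_fromCols, hE.mul_eq, hcol, Sum.comp_elim, ← fromBlocks_diagonal,
      fromCols_mul_fromBlocks]
    simp only [Matrix.mul_zero, add_zero, zero_add]

lemma reindex (hE : IsEigenframe A E ν) (σ : ι ≃ κ) :
    IsEigenframe A (E.submatrix id σ) (ν ∘ σ) where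
  conjTranspose_mul_self := by
    rw [conjTranspose_submatrix, ← submatrix_mul _ _ _ id _ Function.bijective_id,
      hE.conjTranspose_mul_self, submatrix_one_equiv]
  mul_eq := by
    rw [← Function.comp_assoc, ← submatrix_diagonal_equiv, submatrix_mul_equiv, ← hE.mul_eq]
    rfl

end IsEigenframe

lemma exists_isEigenframe [DecidableEq κ] {A : Matrix m m ℍ[ℝ]} (hA : A.IsHermitian)
    (hκ : Fintype.card κ ≤ Fintype.card m) :
    ∃ (E : Matrix m κ ℍ[ℝ]) (ν : κ → ℝ), IsEigenframe A E ν := by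
  refine Fintype.induction_empty_option (P := fun κ _ => ∀ [DecidableEq κ],
    Fintype.card κ ≤ Fintype.card m → ∃ (E : Matrix m κ ℍ[ℝ]) (ν : κ → ℝ), IsEigenframe A E ν)
    ?of_equiv ?empty ?option κ hκ
  case of_equiv =>
    intro α β _ σ ih _ hβ
    classical
    let _ : Fintype α := Fintype.ofEquiv β σ.symm
    obtain ⟨E, ν, hE⟩ := ih (by rwa [Fintype.card_congr σ])
    exact ⟨_, _, hE.reindex σ.symm⟩
  case empty => exact fun _ => ⟨0, 0, Subsingleton.elim _ _, Subsingleton.elim _ _⟩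
  case option =>
    intro α _ ih _ hα
    classical
    rw [Fintype.card_option] at hα
    obtain ⟨E, ν, hE⟩ := ih (by lia)
    obtain ⟨e, r, horth, hunit, heigen⟩ :=
      exists_unit_eigenvector_orthogonal hA hE.mul_eq (by lia)
    exact ⟨_, _, (hE.fromCols horth hunit heigen).reindex (Equiv.optionEquivSumPUnit α)⟩

theorem exists_unitary_conj_eq_diagonal [DecidableEq m] {A : Matrix m m ℍ[ℝ]}
    (hA : A.IsHermitian) :
    ∃ (E : Matrix m m ℍ[ℝ]) (ν : m → ℝ), Eᴴ * E = 1 ∧ E * Eᴴ = 1 ∧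
      Eᴴ * A * E = diagonal (algebraMap ℝ ℍ[ℝ] ∘ ν) := by
  obtain ⟨E, ν, hE⟩ := exists_isEigenframe hA le_rfl
  refine ⟨E, ν, hE.conjTranspose_mul_self, mul_eq_one_comm.1 hE.conjTranspose_mul_self, ?_⟩
  rw [Matrix.mul_assoc, hE.mul_eq, ← Matrix.mul_assoc, hE.conjTranspose_mul_self, Matrix.one_mul]

end Spectral

/-- a real skew-symmetric 2-form matrix can be normalized by a
quaternionic unitary matrix: τ(𝓔)ᵗ·M·τ(𝓔) = [[0,D],[−D,0]], D real diagonal. -/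
theorem stmt_7 {n : ℕ} (M : Matrix (Idx n) (Idx n) ℂ) (hskew : Mᵀ = -M)
    (hreal : Jmat n * conjM M = M * Jmat n) :
    ∃ E : Matrix (Fin n) (Fin n) ℍ[ℝ], Eᴴ * E = 1 ∧ E * Eᴴ = 1 ∧
      ∃ ν : Fin n → ℝ,
        (tau E)ᵀ * M * tau E =
          Matrix.fromBlocks 0 (Matrix.diagonal fun i => ((ν i : ℝ) : ℂ))
            (-(Matrix.diagonal fun i => ((ν i : ℝ) : ℂ))) 0 := by
  obtain ⟨H, hH, rfl⟩ := exists_isHermitian_Jmat_mul_tau_eq hskew hreal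
  obtain ⟨E, ν, hE, hE', hdiag⟩ := exists_unitary_conj_eq_diagonal hH
  refine ⟨E, hE, hE', ν, ?_⟩
  calc (tau E)ᵀ * (Jmat n * tau H) * tau E
      = Jmat n * tau (Eᴴ * H * E) := by
        simp only [tau_mul, tau_conjTranspose, ← Matrix.mul_assoc, tau_transpose_mul_Jmat]
    _ = Jmat n * fromBlocks (diagonal fun i => (ν i : ℂ)) 0 0 (diagonal fun i => (ν i : ℂ)) := by
        rw [hdiag, tau_diagonal_algebraMap]
    _ = _ := by simp [Jmat, fromBlocks_multiply, -fromBlocks_diagonal, diagonal_neg]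

end
end

section
/- For every ε > 0 and every q ∈ ℝ^{4n}, the n-fold exterior power of the Baston operator applied to u_ε(q) = −1/(‖q‖²+ε) satisfies (Δu_ε(q))∧⋯∧(Δu_ε(q)) = 8ⁿ·n!·ε·(‖q‖²+ε)^{−(2n+1)}·Ω_{2n}. -/
open scoped Quaternion
open Matrix Sum

noncomputable section

/-!
The operators `∇_{Aα}` are complex derivations, so the Baston operator obeys the chain rule
`Δ(φ ∘ f) = φ'(f) Δf + φ''(f) d₀f ∧ d₁f`. For `f = ‖q‖²` one has `Δf = 8 βₙ`, and the symplectic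
form pairs `d₀f` with `d₁f` to `4‖q‖²`. The `n`-th power of `s βₙ + c a ∧ b` is affine in `c`,
because `a ∧ b` is a square-zero element commuting with `βₙ`. Contracting the relation
`βₙⁿ⁺¹ = 0` twice evaluates the linear term: `n a ∧ b ∧ βₙⁿ⁻¹ = σ(a, b) βₙⁿ`, where `σ` is the
symplectic form.
-/

section SquareZero

variable {R : Type*} [Semiring R]

lemma add_pow_succ_of_commute_of_mul_self_eq_zero {x y : R} (hxy : Commute x y) (hy : y * y = 0)
    (k : ℕ) : (x + y) ^ (k + 1) = x ^ (k + 1) + (k + 1) • (x ^ k * y) := by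
  induction k with
  | zero => simp
  | succ k ih =>
    have hy' : x ^ k * y * y = 0 := by rw [mul_assoc, hy, mul_zero]
    have hx : x ^ k * y * x = x ^ (k + 1) * y := by
      rw [mul_assoc, ← hxy.eq, ← mul_assoc, pow_succ]
    rw [pow_succ, ih, mul_add, add_mul, add_mul, smul_mul_assoc, smul_mul_assoc, hx, hy', smul_zero,
      add_zero, ← pow_succ, add_assoc, ← succ_nsmul]

variable {l : List R}

lemma list_sum_pow_length_succ_eq_zero (hcomm : ∀ x ∈ l, ∀ y ∈ l, Commute x y)
    (hsq : ∀ x ∈ l, x * x = 0) : l.sum ^ (l.length + 1) = 0 := by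
  induction l with
  | nil => simp
  | cons x l ih =>
    simp only [List.forall_mem_cons] at hcomm hsq
    have hx : Commute l.sum x := (Commute.list_sum_right _ _ hcomm.1.2).symm
    have hl : l.sum ^ (l.length + 1) = 0 := ih (fun y hy => (hcomm.2 y hy).2) hsq.2
    rw [List.sum_cons, List.length_cons, add_comm x,
      add_pow_succ_of_commute_of_mul_self_eq_zero hx hsq.1, pow_succ, hl, zero_mul, zero_mul,
      smul_zero, add_zero]

lemma list_sum_pow_length (hcomm : ∀ x ∈ l, ∀ y ∈ l, Commute x y) (hsq : ∀ x ∈ l, x * x = 0) :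
    l.sum ^ l.length = l.length.factorial • l.prod := by
  induction l with
  | nil => simp
  | cons x l ih =>
    simp only [List.forall_mem_cons] at hcomm hsq
    have hx : Commute l.sum x := (Commute.list_sum_right _ _ hcomm.1.2).symm
    have hcomm' : ∀ y ∈ l, ∀ z ∈ l, Commute y z := fun y hy => (hcomm.2 y hy).2
    rw [List.sum_cons, List.length_cons, add_comm x,
      add_pow_succ_of_commute_of_mul_self_eq_zero hx hsq.1,
      list_sum_pow_length_succ_eq_zero hcomm' hsq.2, zero_add, (hx.pow_left _).eq, ih hcomm' hsq.2,
      mul_smul_comm, smul_smul, List.prod_cons, Nat.factorial_succ]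

end SquareZero

section Bivector

open ExteriorAlgebra
open CliffordAlgebra (contractLeft contractLeft_ι_mul)

variable {R M : Type*} [CommRing R] [AddCommGroup M] [Module R M]

lemma ι_mul_ι_anticomm (x y : M) :
    ι R x * ι R y = -(ι R y * ι R x) :=
  eq_neg_of_add_eq_zero_left (ι_add_mul_swap x y)

lemma commute_ι_mul_ι_ι (x y z : M) :
    Commute (ι R x * ι R y) (ι R z) := by
  rw [commute_iff_eq, mul_assoc, ι_mul_ι_anticomm y z, mul_neg, ← mul_assoc,
    ι_mul_ι_anticomm x z, neg_mul, neg_neg, mul_assoc]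

lemma ι_mul_ι_mul_self (x y : M) :
    ι R x * ι R y * (ι R x * ι R y) = 0 := by
  rw [← mul_assoc, (commute_ι_mul_ι_ι x y x).eq, ← mul_assoc, ι_sq_zero, zero_mul, zero_mul]

lemma contractLeft_ι_mul_ι_mul (d : Module.Dual R M) (x y : M) (w : ExteriorAlgebra R M) :
    contractLeft d (ι R x * ι R y * w) =
      ι R (d x • y - d y • x) * w + ι R x * ι R y * contractLeft d w := by
  rw [mul_assoc, contractLeft_ι_mul, contractLeft_ι_mul, map_sub, map_smul, map_smul, sub_mul,
    smul_mul_assoc, smul_mul_assoc, mul_sub, mul_smul_comm, ← mul_assoc (ι R x)]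
  abel

end Bivector

section Symplectic

open ExteriorAlgebra (ι)
open CliffordAlgebra (contractLeft contractLeft_one contractLeft_ι_mul)

variable {n : ℕ}

lemma ι_eq_sum_smul_ω (a : Vc n) : ι ℂ a = ∑ A, a A • (ω A : EA n) := by
  conv_lhs => rw [pi_eq_sum_univ' a]
  simp only [map_sum, map_smul, ω]

lemma sum_sum_mul_smul_ω_mul_ω (a b : Vc n) :
    ∑ A, ∑ B, (a A * b B) • (ω A * ω B : EA n) = ι ℂ a * ι ℂ b := by
  simp only [ι_eq_sum_smul_ω a, ι_eq_sum_smul_ω b, Finset.sum_mul_sum, smul_mul_smul_comm]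

lemma sum_sum_Jmat_smul_ω_mul_ω :
    ∑ A, ∑ B, Jmat n A B • (ω A * ω B : EA n) = (2 : ℂ) • βn n := by
  have hω (l : Fin n) : (ω (inr l) * ω (inl l) : EA n) = -(ω (inl l) * ω (inr l)) :=
    ι_mul_ι_anticomm _ _
  simp [Jmat, Fintype.sum_sum_type, Matrix.one_apply, ite_smul, hω, βn, two_smul]

/-- The symplectic form `σ(a, b) = aᵀ J b` on `ℂ²ⁿ`. -/
def symplecticForm (n : ℕ) : LinearMap.BilinForm ℂ (Vc n) := Matrix.toBilin' (Jmat n)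

lemma symplecticForm_apply (a b : Vc n) :
    symplecticForm n a b = ∑ l, (a (inl l) * b (inr l) - a (inr l) * b (inl l)) := by
  simp [symplecticForm, Matrix.toBilin'_apply, Jmat, Matrix.one_apply, Finset.sum_sub_distrib,
    ← sub_eq_add_neg]

lemma symplecticForm_single_inl (a : Vc n) (l : Fin n) :
    symplecticForm n a (Pi.single (inl l) 1) = -a (inr l) := by
  simp [symplecticForm_apply, Pi.single_apply]

lemma symplecticForm_single_inr (a : Vc n) (l : Fin n) :
    symplecticForm n a (Pi.single (inr l) 1) = a (inl l) := by
  simp [symplecticForm_apply, Pi.single_apply]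

lemma commute_ω_mul_ω (A B C D : Idx n) : Commute (ω A * ω B : EA n) (ω C * ω D) :=
  (commute_ι_mul_ι_ι _ _ _).mul_right (commute_ι_mul_ι_ι _ _ _)

lemma commute_βn_ι (a : Vc n) : Commute (βn n) (ι ℂ a) :=
  Commute.sum_left _ _ _ fun _ _ => commute_ι_mul_ι_ι _ _ _

lemma βn_pow_succ_self (n : ℕ) : βn n ^ (n + 1) = 0 := by
  have h := list_sum_pow_length_succ_eq_zero (l := List.ofFn fun l : Fin n => ω (inl l) * ω (inr l))
    (by simp only [List.forall_mem_ofFn_iff]; exact fun _ _ => commute_ω_mul_ω _ _ _ _)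
    (by simp only [List.forall_mem_ofFn_iff]; exact fun _ => ι_mul_ι_mul_self _ _)
  rwa [List.sum_ofFn, List.length_ofFn] at h

lemma βn_pow_self (n : ℕ) : βn n ^ n = (n.factorial : ℂ) • Ωn n := by
  have h := list_sum_pow_length (l := List.ofFn fun l : Fin n => ω (inl l) * ω (inr l))
    (by simp only [List.forall_mem_ofFn_iff]; exact fun _ _ => commute_ω_mul_ω _ _ _ _)
    (by simp only [List.forall_mem_ofFn_iff]; exact fun _ => ι_mul_ι_mul_self _ _)
  rwa [List.sum_ofFn, List.length_ofFn, ← Nat.cast_smul_eq_nsmul ℂ] at h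

lemma contractLeft_symplecticForm_βn_mul (a : Vc n) (w : EA n) :
    contractLeft (symplecticForm n a) (βn n * w) =
      βn n * contractLeft (symplecticForm n a) w - ι ℂ a * w := by
  have ha : ι ℂ a = ∑ l, (a (inl l) • (ω (inl l) : EA n) + a (inr l) • ω (inr l)) := by
    rw [ι_eq_sum_smul_ω, Fintype.sum_sum_type, Finset.sum_add_distrib]
  simp only [βn, ha, Finset.sum_mul, map_sum, ← Finset.sum_sub_distrib]
  refine Finset.sum_congr rfl fun l _ => ?_
  simp only [ω, contractLeft_ι_mul_ι_mul, symplecticForm_single_inl, symplecticForm_single_inr,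
    map_sub, map_neg, map_smul, add_mul, sub_mul, neg_smul, neg_mul]
  abel

lemma contractLeft_symplecticForm_βn_pow_succ (a : Vc n) (k : ℕ) :
    contractLeft (symplecticForm n a) (βn n ^ (k + 1)) = -((k + 1) • (ι ℂ a * βn n ^ k)) := by
  induction k with
  | zero => simpa using contractLeft_symplecticForm_βn_mul a 1
  | succ k ih =>
    rw [pow_succ', contractLeft_symplecticForm_βn_mul, ih, mul_neg, mul_smul_comm, ← mul_assoc,
      (commute_βn_ι a).eq, mul_assoc, ← pow_succ', succ_nsmul _ (k + 1)]
    abel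

lemma ι_mul_βn_pow_self (a : Vc n) : ι ℂ a * βn n ^ n = 0 := by
  have h := contractLeft_symplecticForm_βn_pow_succ a n
  rw [βn_pow_succ_self, map_zero, zero_eq_neg, ← Nat.cast_smul_eq_nsmul ℂ] at h
  exact (smul_eq_zero.mp h).resolve_left (Nat.cast_ne_zero.mpr n.succ_ne_zero)

lemma succ_nsmul_ι_mul_ι_mul_βn_pow {k : ℕ} (a b : Vc (k + 1)) :
    (k + 1) • (ι ℂ a * ι ℂ b * βn (k + 1) ^ k) =
      symplecticForm (k + 1) a b • βn (k + 1) ^ (k + 1) := by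
  have h : contractLeft (symplecticForm (k + 1) a) (ι ℂ b * βn (k + 1) ^ (k + 1)) = 0 := by
    rw [ι_mul_βn_pow_self, map_zero]
  rw [contractLeft_ι_mul, contractLeft_symplecticForm_βn_pow_succ, mul_neg, sub_neg_eq_add,
    mul_smul_comm, ← mul_assoc, ι_mul_ι_anticomm b a, neg_mul, smul_neg, ← sub_eq_add_neg] at h
  exact (sub_eq_zero.mp h).symm

lemma smul_βn_add_smul_ι_mul_ι_pow (s c : ℂ) (a b : Vc n) :
    (s • βn n + c • (ι ℂ a * ι ℂ b)) ^ n =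
      (n.factorial * (s ^ n + s ^ (n - 1) * c * symplecticForm n a b)) • Ωn n := by
  rcases n with _ | k
  · simp [symplecticForm_apply, Ωn]
  have hcomm : Commute (βn (k + 1)) (ι ℂ a * ι ℂ b) := (commute_βn_ι a).mul_right (commute_βn_ι b)
  have hsq : c • (ι ℂ a * ι ℂ b) * c • (ι ℂ a * ι ℂ b) = 0 := by
    rw [smul_mul_smul_comm, ι_mul_ι_mul_self, smul_zero]
  have hlin : (k + 1) • (s ^ k • βn (k + 1) ^ k * c • (ι ℂ a * ι ℂ b)) =
      (s ^ k * c * symplecticForm (k + 1) a b) • βn (k + 1) ^ (k + 1) := by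
    rw [smul_mul_smul_comm, (hcomm.pow_left k).eq, smul_comm, succ_nsmul_ι_mul_ι_mul_βn_pow,
      smul_smul]
  rw [add_pow_succ_of_commute_of_mul_self_eq_zero ((hcomm.smul_left s).smul_right c) hsq,
    smul_pow, smul_pow, hlin, ← add_smul, βn_pow_self, smul_smul, Nat.add_sub_cancel]
  congr 1
  ring

end Symplectic

section ChainRule

open ExteriorAlgebra (ι)
open Filter Topology

variable {n : ℕ} {q : V4 n}

lemma pd_ofReal {f : V4 n → ℝ} (hf : DifferentiableAt ℝ f q) (a : Fin (4 * n)) :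
    pd a (fun x => (f x : ℂ)) q = (fderiv ℝ f q (Pi.single a 1) : ℝ) := by
  have h : HasFDerivAt (fun x => (f x : ℂ)) (Complex.ofRealCLM.comp (fderiv ℝ f q)) q :=
    Complex.ofRealCLM.hasFDerivAt.comp q hf.hasFDerivAt
  rw [pd, h.fderiv]
  rfl

lemma pd_ofReal_comp {φ : ℝ → ℝ} {f : V4 n → ℝ} (hφ : DifferentiableAt ℝ φ (f q))
    (hf : DifferentiableAt ℝ f q) (a : Fin (4 * n)) :
    pd a (fun x => ((φ (f x) : ℝ) : ℂ)) q =
      (deriv φ (f q) : ℝ) * pd a (fun x => (f x : ℂ)) q := by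
  have h := (hφ.hasDerivAt.comp_hasFDerivAt q hf.hasFDerivAt).fderiv
  rw [pd_ofReal (f := fun x => φ (f x)) (hφ.comp q hf), pd_ofReal hf]
  simp only [Function.comp_def] at h
  simp [h]

lemma pd_mul {f g : V4 n → ℂ} (hf : DifferentiableAt ℝ f q) (hg : DifferentiableAt ℝ g q)
    (a : Fin (4 * n)) : pd a (fun x => f x * g x) q = f q * pd a g q + g q * pd a f q := by
  simp [pd, fderiv_fun_mul hf hg]

lemma nabla_mul {f g : V4 n → ℂ} (hf : DifferentiableAt ℝ f q) (hg : DifferentiableAt ℝ g q)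
    (A : Idx n) (α : Fin 2) :
    nabla A α (fun x => f x * g x) q = f q * nabla A α g q + g q * nabla A α f q := by
  rcases A with l | l <;> simp only [nabla, pd_mul hf hg] <;> split_ifs <;> ring

lemma nablaR_comp {φ : ℝ → ℝ} {f : V4 n → ℝ} (hφ : DifferentiableAt ℝ φ (f q))
    (hf : DifferentiableAt ℝ f q) (A : Idx n) (α : Fin 2) :
    nablaR A α (fun x => φ (f x)) q = (deriv φ (f q) : ℝ) * nablaR A α f q := by
  rcases A with l | l <;> simp only [nablaR, nabla, pd_ofReal_comp hφ hf] <;> split_ifs <;> ring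

lemma nabla_congr_of_eventuallyEq {f g : V4 n → ℂ} (h : f =ᶠ[𝓝 q] g) (A : Idx n) (α : Fin 2) :
    nabla A α f q = nabla A α g q := by
  rcases A with l | l <;> simp only [nabla, pd, h.fderiv_eq]

lemma differentiableAt_nablaR {f : V4 n → ℝ} (hf : ContDiffAt ℝ 2 f q) (A : Idx n) (α : Fin 2) :
    DifferentiableAt ℝ (nablaR A α f) q := by
  have hpd (a : Fin (4 * n)) : DifferentiableAt ℝ (pd a fun x => (f x : ℂ)) q := by
    have hC : ContDiffAt ℝ 2 (fun x => (f x : ℂ)) q :=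
      Complex.ofRealCLM.contDiff.contDiffAt.comp q hf
    have h' : DifferentiableAt ℝ (fderiv ℝ fun x => (f x : ℂ)) q :=
      (hC.fderiv_right (m := 1) le_rfl).differentiableAt one_ne_zero
    exact h'.clm_apply (differentiableAt_const _)
  rcases A with l | l <;> unfold nablaR nabla <;> dsimp only <;> split_ifs <;> fun_prop

lemma nabla_nablaR_comp {φ : ℝ → ℝ} {f : V4 n → ℝ} (hφ : ContDiffAt ℝ 2 φ (f q))
    (hf : ContDiffAt ℝ 2 f q) (A B : Idx n) (α β : Fin 2) :
    nabla A α (nablaR B β fun x => φ (f x)) q =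
      (deriv φ (f q) : ℝ) * nabla A α (nablaR B β f) q +
        (deriv (deriv φ) (f q) : ℝ) * (nablaR A α f q * nablaR B β f q) := by
  have hf₁ : DifferentiableAt ℝ f q := hf.differentiableAt two_ne_zero
  have hφ' : DifferentiableAt ℝ (deriv φ) (f q) :=
    ((hφ.fderiv_right (m := 1) le_rfl).differentiableAt one_ne_zero).clm_apply
      (differentiableAt_const 1)
  have hfirst : (nablaR B β fun x => φ (f x)) =ᶠ[𝓝 q]
      fun x => ((deriv φ (f x) : ℝ) : ℂ) * nablaR B β f x := by
    filter_upwards [hf.eventually (by simp), hf.continuousAt.eventually (hφ.eventually (by simp))]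
      with x hfx hφx
    exact nablaR_comp (hφx.differentiableAt two_ne_zero) (hfx.differentiableAt two_ne_zero) B β
  have hcoeff : nabla A α (fun x => ((deriv φ (f x) : ℝ) : ℂ)) q =
      (deriv (deriv φ) (f q) : ℝ) * nablaR A α f q := nablaR_comp hφ' hf₁ A α
  rw [nabla_congr_of_eventuallyEq hfirst,
    nabla_mul (f := fun x => ((deriv φ (f x) : ℝ) : ℂ))
      (Complex.ofRealCLM.differentiableAt.comp q (hφ'.comp q hf₁)) (differentiableAt_nablaR hf B β),
    hcoeff]
  ring

lemma Delta_eq_nabla_nablaR (A B : Idx n) (u : V4 n → ℝ) (q : V4 n) :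
    Delta A B u q = 1 / 2 * (nabla A 0 (nablaR B 1 u) q - nabla B 0 (nablaR A 1 u) q) :=
  rfl

lemma Delta_comp {φ : ℝ → ℝ} {f : V4 n → ℝ} (hφ : ContDiffAt ℝ 2 φ (f q))
    (hf : ContDiffAt ℝ 2 f q) (A B : Idx n) :
    Delta A B (fun x => φ (f x)) q =
      (deriv φ (f q) : ℝ) * Delta A B f q + (deriv (deriv φ) (f q) : ℝ) * (1 / 2) *
        (nablaR A 0 f q * nablaR B 1 f q - nablaR A 1 f q * nablaR B 0 f q) := by
  rw [Delta_eq_nabla_nablaR, Delta_eq_nabla_nablaR, nabla_nablaR_comp hφ hf,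
    nabla_nablaR_comp hφ hf]
  ring

theorem Baston_comp {φ : ℝ → ℝ} {f : V4 n → ℝ} (hφ : ContDiffAt ℝ 2 φ (f q))
    (hf : ContDiffAt ℝ 2 f q) :
    Baston (fun x => φ (f x)) q =
      ((deriv φ (f q) : ℝ) : ℂ) • Baston f q + ((deriv (deriv φ) (f q) : ℝ) : ℂ) •
        (ι ℂ (fun A => nablaR A 0 f q) * ι ℂ fun A => nablaR A 1 f q) := by
  set a : Vc n := fun A => nablaR A 0 f q
  set b : Vc n := fun A => nablaR A 1 f q
  have hΔ (A B : Idx n) : Delta A B (fun x => φ (f x)) q =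
      (deriv φ (f q) : ℝ) * Delta A B f q +
        (deriv (deriv φ) (f q) : ℝ) * (1 / 2) * (a A * b B - b A * a B) := Delta_comp hφ hf A B
  have hab : ∑ A, ∑ B, (a A * b B - b A * a B) • (ω A * ω B : EA n) =
      (2 : ℂ) • (ι ℂ a * ι ℂ b) := by
    simp only [sub_smul, Finset.sum_sub_distrib, sum_sum_mul_smul_ω_mul_ω]
    rw [ι_mul_ι_anticomm b a, sub_neg_eq_add, two_smul]
  simp only [Baston, hΔ, add_smul, Finset.sum_add_distrib, mul_smul _ (_ - _),
    mul_smul _ (Delta _ _ _ _), ← Finset.smul_sum]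
  rw [hab, smul_smul, mul_assoc, one_div_mul_cancel two_ne_zero, mul_one]

end ChainRule

section SquaredNorm

open ExteriorAlgebra (ι)

variable {n : ℕ}

/-- The squared Euclidean norm `‖x‖²`; the norm that `V4 n` carries in Mathlib is the sup norm. -/
def sqNorm (x : V4 n) : ℝ := ∑ a, x a ^ 2

/-- The coordinates of `ℝ⁴ⁿ` grouped into quaternions: `(l, β) ↦ 4l + β`. -/
def coordEquiv (n : ℕ) : Fin n × Fin 4 ≃ Fin (4 * n) :=
  finProdFinEquiv.trans (finCongr (mul_comm n 4))

lemma coordEquiv_apply (l : Fin n) (β : Fin 4) : coordEquiv n (l, β) = X l β := by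
  simp [coordEquiv, X, Fin.ext_iff, add_comm]

lemma X_inj {l m : Fin n} {β γ : Fin 4} : X l β = X m γ ↔ l = m ∧ β = γ := by
  rw [← coordEquiv_apply, ← coordEquiv_apply, (coordEquiv n).injective.eq_iff, Prod.mk.injEq]

lemma sqNorm_eq_sum_X (q : V4 n) :
    sqNorm q = ∑ l, (q (X l 0) ^ 2 + q (X l 1) ^ 2 + q (X l 2) ^ 2 + q (X l 3) ^ 2) := by
  simp only [sqNorm, ← (coordEquiv n).sum_comp, Fintype.sum_prod_type, coordEquiv_apply,
    Fin.sum_univ_four]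

lemma contDiff_sqNorm {k : WithTop ℕ∞} : ContDiff ℝ k (sqNorm : V4 n → ℝ) := by
  unfold sqNorm
  fun_prop

lemma pd_sqNorm (a : Fin (4 * n)) (q : V4 n) : pd a (fun x => (sqNorm x : ℂ)) q = 2 * q a := by
  have h : HasFDerivAt (sqNorm : V4 n → ℝ)
      (∑ b, (2 * q b) • (ContinuousLinearMap.proj b : V4 n →L[ℝ] ℝ)) q := by
    refine HasFDerivAt.fun_sum fun b _ => ?_
    simpa using ((ContinuousLinearMap.proj b : V4 n →L[ℝ] ℝ).hasFDerivAt (x := q)).pow 2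
  rw [pd_ofReal h.differentiableAt, h.fderiv]
  simp [Pi.single_apply]

lemma nablaR_sqNorm (A : Idx n) (α : Fin 2) :
    nablaR A α sqNorm = fun q => 2 * starRingEnd ℂ (zc A α q) := by
  funext q
  rcases A with l | l <;> simp only [nablaR, nabla, zc, pd_sqNorm] <;> split_ifs <;>
    apply Complex.ext <;> simp

lemma isLinearMap_zc (A : Idx n) (α : Fin 2) : IsLinearMap ℝ (zc A α) := by
  constructor <;> intros <;> rcases A with l | l <;> simp only [zc] <;> split_ifs <;>
    apply Complex.ext <;> simp [add_comm]

lemma pd_of_isLinearMap {f : V4 n → ℂ} (hf : IsLinearMap ℝ f) (a : Fin (4 * n)) (q : V4 n) :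
    pd a f q = f (Pi.single a 1) := by
  have h : fderiv ℝ f q = LinearMap.toContinuousLinearMap (hf.mk' f) :=
    (LinearMap.toContinuousLinearMap (hf.mk' f)).fderiv
  rw [pd, h]
  rfl

lemma nabla_nablaR_sqNorm (A B : Idx n) (q : V4 n) :
    nabla A 0 (nablaR B 1 sqNorm) q = 4 * Jmat n A B := by
  have hlin : IsLinearMap ℝ fun x => 2 * starRingEnd ℂ (zc B 1 x) :=
    ⟨fun x y => by simp only [(isLinearMap_zc B 1).map_add, map_add, mul_add],
      fun c x => by simp [(isLinearMap_zc B 1).map_smul]; ring⟩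
  rw [nablaR_sqNorm]
  rcases A with l | l <;> rcases B with m | m <;> by_cases hlm : l = m <;>
    simp only [nabla, pd_of_isLinearMap hlin] <;>
    simp [zc, Jmat, X_inj, hlm, Complex.ext_iff] <;>
    norm_num

lemma Baston_sqNorm (q : V4 n) : Baston sqNorm q = (8 : ℂ) • βn n := by
  have hΔ (A B : Idx n) : Delta A B sqNorm q = 4 * Jmat n A B := by
    have hJ : Jmat n B A = -Jmat n A B := by
      rcases A with l | l <;> rcases B with m | m <;> simp [Jmat, Matrix.one_apply, eq_comm]
    rw [Delta_eq_nabla_nablaR, nabla_nablaR_sqNorm, nabla_nablaR_sqNorm, hJ]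
    ring
  simp only [Baston, hΔ, mul_smul, ← Finset.smul_sum]
  rw [sum_sum_Jmat_smul_ω_mul_ω, smul_smul, show (4 * 2 : ℂ) = 8 by norm_num]

lemma symplecticForm_nablaR_sqNorm (q : V4 n) :
    symplecticForm n (fun A => nablaR A 0 sqNorm q) (fun A => nablaR A 1 sqNorm q) =
      4 * sqNorm q := by
  simp only [symplecticForm_apply, nablaR_sqNorm, sqNorm_eq_sum_X, Complex.ofReal_sum,
    Finset.mul_sum]
  refine Finset.sum_congr rfl fun l _ => ?_
  apply Complex.ext <;> simp [zc, pow_two] <;> ring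

/-- At `n = 0` the truncated exponent `n - 1` is harmless, since `sqNorm q = 0` there. -/
theorem Baston_comp_sqNorm_pow {φ : ℝ → ℝ} {q : V4 n} (hφ : ContDiffAt ℝ 2 φ (sqNorm q)) :
    Baston (fun x => φ (sqNorm x)) q ^ n =
      ((n.factorial * ((8 * deriv φ (sqNorm q)) ^ n + (8 * deriv φ (sqNorm q)) ^ (n - 1) *
        deriv (deriv φ) (sqNorm q) * (4 * sqNorm q)) : ℝ) : ℂ) • Ωn n := by
  rw [Baston_comp hφ contDiff_sqNorm.contDiffAt, Baston_sqNorm, smul_smul, mul_comm _ (8 : ℂ),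
    smul_βn_add_smul_ι_mul_ι_pow, symplecticForm_nablaR_sqNorm]
  push_cast
  rfl

end SquaredNorm

lemma deriv_neg_one_div_add_const (ε : ℝ) :
    deriv (fun t => -(1 / (t + ε))) = fun t => ((t + ε) ^ 2)⁻¹ := by
  funext t
  simp only [one_div, deriv.fun_neg, deriv_comp_add_const (fun s : ℝ => s⁻¹), deriv_inv, neg_neg]

lemma deriv_inv_add_const_sq (ε t : ℝ) :
    deriv (fun t => ((t + ε) ^ 2)⁻¹) t = -2 / (t + ε) ^ 3 := by
  have hzpow : (fun s : ℝ => (s ^ 2)⁻¹) = fun s => s ^ (-2 : ℤ) := by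
    funext s
    rw [_root_.zpow_neg, zpow_ofNat]
  rw [deriv_comp_add_const (fun s : ℝ => (s ^ 2)⁻¹), hzpow, deriv_zpow]
  norm_num [_root_.zpow_neg, div_eq_mul_inv]

theorem stmt_16_general {n : ℕ} (ε : ℝ) (q : V4 n) (hq : (∑ a, q a ^ 2) + ε ≠ 0) :
    (Baston (fun x => -(1 / ((∑ a, x a ^ 2) + ε))) q) ^ n =
      ((((8 : ℝ) ^ n * n.factorial * ε / ((∑ a, q a ^ 2) + ε) ^ (2 * n + 1) : ℝ)) : ℂ) •
        Ωn n := by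
  change sqNorm q + ε ≠ 0 at hq
  have hφ : ContDiffAt ℝ 2 (fun t => -(1 / (t + ε))) (sqNorm q) :=
    (contDiffAt_const.div (contDiffAt_id.add contDiffAt_const) hq).neg
  refine (Baston_comp_sqNorm_pow hφ).trans ?_
  simp only [deriv_neg_one_div_add_const, deriv_inv_add_const_sq]
  congr 2
  change _ = 8 ^ n * n.factorial * ε / (sqNorm q + ε) ^ (2 * n + 1)
  rcases n with _ | k
  · have : sqNorm q = 0 := by simp [sqNorm]
    simp_all
  · rw [Nat.add_sub_cancel, mul_pow, mul_pow, inv_pow, inv_pow, ← pow_mul, ← pow_mul]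
    field_simp
    ring

/-- (Δ(−1/(‖q‖²+ε)))^∧n = 8ⁿ·n!·ε·(‖q‖²+ε)^{−(2n+1)}·Ω_{2n}. -/
theorem stmt_16 {n : ℕ} (ε : ℝ) (hε : 0 < ε) (q : V4 n) :
    (Baston (fun x => -(1 / ((∑ a, x a ^ 2) + ε))) q) ^ n =
      ((((8 : ℝ) ^ n * n.factorial * ε / ((∑ a, q a ^ 2) + ε) ^ (2 * n + 1) : ℝ)) : ℂ) •
        Ωn n :=
  stmt_16_general ε q (by positivity)

end
end
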